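/- There exists a sentence α of ESG that is valid in ESG but not valid in t-ESG. In particular, for an action standard name p and a nullary fluent predicate F, the sentence α = [p]F ∨ [p]¬F is valid in ESG, but there is a t-ESG world w with w[F, ⟨0, p⟩] = 0 and w[F, ⟨1, p⟩] = 1, so that w ⊭ α and hence α is not t-ESG-valid. -/

import Mathlib

namespace TESG

/-! ### Sorts, standard names, symbols -/

inductive Sort3 : Type
  | obj | act | clk
  deriving DecidableEq

/-- A standard name: a sort together with a numeric identifier
(there are countably infinitely many standard names of each sort). -/
structure Name : Type where
  sort : Sort3
  id : ℕ
  deriving DecidableEq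

/-- A function symbol (with a result sort and a fluent/rigid flag). -/
structure FuncSym : Type where
  id : ℕ
  sort : Sort3
  fluent : Bool
  deriving DecidableEq

/-- Predicate symbols: the distinguished fluents `poss`, `reset` and the
clock-constraint predicate `gc`, plus ordinary fluent (`fl`) and rigid (`rg`)
predicate symbols. -/
inductive PredSym : Type
  | poss | reset | gc
  | fl (id : ℕ)
  | rg (id : ℕ)
  deriving DecidableEq

def PredSym.isFluent : PredSym → Bool
  | .rg _ => false
  | _ => true

inductive CmpOp : Type
  | lt | le | eq | ge | gt
  deriving DecidableEq

def CmpOp.holds : CmpOp → ℝ → ℝ → Prop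
  | .lt, a, b => a < b
  | .le, a, b => a ≤ b
  | .eq, a, b => a = b
  | .ge, a, b => b ≤ a
  | .gt, a, b => b < a

/-- Open, closed or half-closed intervals with natural number endpoints
(`hi = none` means `∞`). -/
structure Ival : Type where
  lo : ℕ
  hi : Option ℕ
  loOpen : Bool
  hiOpen : Bool
  deriving DecidableEq

def Ival.memR (I : Ival) (x : ℝ) : Prop :=
  (if I.loOpen then (I.lo : ℝ) < x else (I.lo : ℝ) ≤ x) ∧
  (match I.hi with
   | none => True
   | some h => if I.hiOpen then x < (h : ℝ) else x ≤ (h : ℝ))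

def Ival.unbounded : Ival := ⟨0, none, false, false⟩

/-! ### Terms -/

mutual
  inductive Term : Type
    | name (n : Name)
    | app (f : FuncSym) (args : ArgList)
  inductive ArgList : Type
    | nil
    | cons (t : Term) (ts : ArgList)
end

def ArgList.ofNames : List Name → ArgList
  | [] => .nil
  | n :: ns => .cons (.name n) (ArgList.ofNames ns)

/-! ### Formulas (situation formulas, trace formulas) and Golog programs.
Quantification is understood substitutionally over standard names and is
represented by binding a standard name (higher-order abstract syntax). -/

mutual
  inductive SitForm : Type
    | pred (P : PredSym) (args : ArgList)
    | eq (t₁ t₂ : Term)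
    | clockCmp (c : Term) (op : CmpOp) (r : ℚ)
    | constCmp (r : ℚ) (op : CmpOp) (r' : ℚ)
    | and (α β : SitForm)
    | not (α : SitForm)
    | all (s : Sort3) (body : Name → SitForm)
    | box (α : SitForm)
    | after (δ : Prog) (α : SitForm)
    | during (δ : Prog) (φ : TraceForm)
    | duringFin (δ : Prog) (φ : TraceForm)
  inductive TraceForm : Type
    | base (α : SitForm)
    | and (φ ψ : TraceForm)
    | not (φ : TraceForm)
    | all (s : Sort3) (body : Name → TraceForm)
    | untl (I : Ival) (φ ψ : TraceForm)
  inductive Prog : Type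
    | act (t : Term)
    | test (α : SitForm)
    | seq (δ₁ δ₂ : Prog)
    | choice (δ₁ δ₂ : Prog)
    | conc (δ₁ δ₂ : Prog)
    | star (δ : Prog)
end

def SitForm.orS (α β : SitForm) : SitForm := .not (.and (.not α) (.not β))
def SitForm.impS (α β : SitForm) : SitForm := .not (.and α (.not β))
def SitForm.iffS (α β : SitForm) : SitForm := .and (α.impS β) (β.impS α)
def trueSit : SitForm := .all .obj fun n => .eq (.name n) (.name n)
def falseSit : SitForm := .not trueSit
def nilProg : Prog := .test trueSit

/-! ### Timed traces.
A finite timed trace is a list of (time point, action standard name) pairs. -/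

abbrev FinTrace := List (ℝ × ℕ)

def lastTime (z : FinTrace) : ℝ := ((z.getLast?).map Prod.fst).getD 0

def TraceWFFrom (t₀ : ℝ) (z : FinTrace) : Prop :=
  List.Chain' (· ≤ ·) (t₀ :: z.map Prod.fst)

def TraceWF : FinTrace → Prop := TraceWFFrom 0

def untimed (z : FinTrace) : List ℕ := z.map Prod.snd

/-! ### Worlds -/

structure World : Type where
  fval : FuncSym → List Name → FinTrace → Name
  pval : PredSym → List Name → FinTrace → Bool
  cval : ℕ → FinTrace → ℝ
  fval_sort : ∀ f args z, (fval f args z).sort = f.sort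
  rigid_fun : ∀ f : FuncSym, f.fluent = false → ∀ args z z', fval f args z = fval f args z'
  rigid_pred : ∀ P : PredSym, P.isFluent = false → ∀ args z z', pval P args z = pval P args z'
  unique_names : ∀ f f' args args' z z', f.sort ≠ Sort3.obj → f'.sort ≠ Sort3.obj →
      (f, args) ≠ (f', args') → fval f args z ≠ fval f' args' z'
  clock_init : ∀ c, cval c [] = 0
  clock_prog : ∀ c z t p, TraceWF (z ++ [(t, p)]) →
      cval c (z ++ [(t, p)]) =
        (if pval PredSym.reset [Name.mk Sort3.clk c] (z ++ [(t, p)]) = true then 0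
         else cval c z + (t - lastTime z))

/-! ### Denotation of ground terms -/

mutual
  def denot (w : World) (z : FinTrace) : Term → Name
    | .name n => n
    | .app f args => w.fval f (denotArgs w z args) z
  def denotArgs (w : World) (z : FinTrace) : ArgList → List Name
    | .nil => []
    | .cons t ts => denot w z t :: denotArgs w z ts
end

/-! ### Truth of static situation formulas at a time-extended trace `z · t`
(fluent values are observed at action occurrences, i.e. at `z`; clock values
are advanced to the time point `t`). -/

def cvalAt (w : World) (z : FinTrace) (t : ℝ) (c : ℕ) : ℝ :=
  w.cval c z + (t - lastTime z)

def StaticSatT (w : World) (z : FinTrace) (t : ℝ) : SitForm → Prop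
  | .pred P args => w.pval P (denotArgs w z args) z = true
  | .eq t₁ t₂ => denot w z t₁ = denot w z t₂
  | .clockCmp c op r =>
      (denot w z c).sort = Sort3.clk ∧ op.holds (cvalAt w z t (denot w z c).id) (r : ℝ)
  | .constCmp r op r' => op.holds (r : ℝ) (r' : ℝ)
  | .and α β => StaticSatT w z t α ∧ StaticSatT w z t β
  | .not α => ¬ StaticSatT w z t α
  | .all s body => ∀ k : ℕ, StaticSatT w z t (body (Name.mk s k))
  | .box _ => False
  | .after _ _ => False
  | .during _ _ => False
  | .duringFin _ _ => False

/-! ### Program transition semantics -/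

/-- Final configurations (`t` is the pending time point of the configuration). -/
inductive Final (w : World) (z : FinTrace) (t : ℝ) : Prog → Prop
  | test {α} : StaticSatT w z t α → Final w z t (.test α)
  | seq {δ₁ δ₂} : Final w z t δ₁ → Final w z t δ₂ → Final w z t (.seq δ₁ δ₂)
  | choiceL {δ₁ δ₂} : Final w z t δ₁ → Final w z t (.choice δ₁ δ₂)
  | choiceR {δ₁ δ₂} : Final w z t δ₂ → Final w z t (.choice δ₁ δ₂)
  | star {δ} : Final w z t (.star δ)
  | conc {δ₁ δ₂} : Final w z t δ₁ → Final w z t δ₂ → Final w z t (.conc δ₁ δ₂)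

/-- Action step of the transition semantics, taken at the time point `t`. -/
inductive TransA (w : World) (z : FinTrace) (t : ℝ) : Prog → FinTrace → Prog → Prop
  | act {a : Term} (h : (denot w z a).sort = Sort3.act) :
      TransA w z t (.act a) (z ++ [(t, (denot w z a).id)]) nilProg
  | seqL {δ₁ δ₂ γ z'} : TransA w z t δ₁ z' γ → TransA w z t (.seq δ₁ δ₂) z' (.seq γ δ₂)
  | seqR {δ₁ δ₂ δ' z'} : Final w z t δ₁ → TransA w z t δ₂ z' δ' → TransA w z t (.seq δ₁ δ₂) z' δ'
  | choiceL {δ₁ δ₂ δ' z'} : TransA w z t δ₁ z' δ' → TransA w z t (.choice δ₁ δ₂) z' δ'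
  | choiceR {δ₁ δ₂ δ' z'} : TransA w z t δ₂ z' δ' → TransA w z t (.choice δ₁ δ₂) z' δ'
  | star {δ γ z'} : TransA w z t δ z' γ → TransA w z t (.star δ) z' (.seq γ (.star δ))
  | concL {δ₁ δ₂ δ' z'} : TransA w z t δ₁ z' δ' → TransA w z t (.conc δ₁ δ₂) z' (.conc δ' δ₂)
  | concR {δ₁ δ₂ δ' z'} : TransA w z t δ₂ z' δ' → TransA w z t (.conc δ₁ δ₂) z' (.conc δ₁ δ')

abbrev Config := FinTrace × Prog

/-- A transition: a time step (to some time point `t` not before the current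
time) followed by an action step. -/
def Trans (w : World) (c c' : Config) : Prop :=
  ∃ t : ℝ, lastTime c.1 ≤ t ∧ TransA w c.1 t c.2 c'.1 c'.2

def FinalC (w : World) (c : Config) : Prop := Final w c.1 (lastTime c.1) c.2

def TransStar (w : World) : Config → Config → Prop :=
  Relation.ReflTransGen (Trans w)

/-! ### Possibly infinite timed traces and program traces -/

inductive TTrace : Type
  | fin (z : FinTrace)
  | inf (π : ℕ → ℝ × ℕ)

def prefixTr (π : ℕ → ℝ × ℕ) (n : ℕ) : FinTrace := (List.range n).map π

def TTrace.len : TTrace → ℕ∞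
  | .fin z => (z.length : ℕ∞)
  | .inf _ => ⊤

def TTrace.takeFin : TTrace → ℕ → FinTrace
  | .fin z, n => z.take n
  | .inf π, n => prefixTr π n

def TTrace.drop : TTrace → ℕ → TTrace
  | .fin z, n => .fin (z.drop n)
  | .inf π, n => .inf (fun i => π (i + n))

def TTrace.WF : TTrace → Prop
  | .fin z => TraceWF z
  | .inf π => (∀ i, 0 ≤ (π i).1) ∧ ∀ i j, i ≤ j → (π i).1 ≤ (π j).1

/-- The program traces `‖δ‖ᶻ_w` of a program `δ` starting after the finite
trace `z` in world `w`: the finite traces leading to a final configuration and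
the infinite traces of runs that never reach a final configuration. -/
def ProgTrace (w : World) (z : FinTrace) (δ : Prog) : TTrace → Prop
  | .fin z' => ∃ δ', TransStar w (z, δ) (z ++ z', δ') ∧ FinalC w (z ++ z', δ')
  | .inf π => ∃ ρ : ℕ → Prog, ρ 0 = δ ∧
      (∀ i, Trans w (z ++ prefixTr π i, ρ i) (z ++ prefixTr π (i + 1), ρ (i + 1))) ∧
      (∀ i, ¬ FinalC w (z ++ prefixTr π (i + 1), ρ (i + 1)))

/-! ### Truth of formulas -/

mutual
  def SatS : World → FinTrace → SitForm → Prop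
    | w, z, .pred P args => w.pval P (denotArgs w z args) z = true
    | w, z, .eq t₁ t₂ => denot w z t₁ = denot w z t₂
    | w, z, .clockCmp c op r =>
        (denot w z c).sort = Sort3.clk ∧ op.holds (w.cval (denot w z c).id z) (r : ℝ)
    | _, _, .constCmp r op r' => op.holds (r : ℝ) (r' : ℝ)
    | w, z, .and α β => SatS w z α ∧ SatS w z β
    | w, z, .not α => ¬ SatS w z α
    | w, z, .all s body => ∀ k : ℕ, SatS w z (body (Name.mk s k))
    | w, z, .box α => ∀ z' : FinTrace, TraceWFFrom (lastTime z) z' → SatS w (z ++ z') α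
    | w, z, .after δ α => ∀ z' : FinTrace, ProgTrace w z δ (.fin z') → SatS w (z ++ z') α
    | w, z, .during δ φ => ∀ τ : TTrace, ProgTrace w z δ τ → SatT w z τ φ
    | w, z, .duringFin δ φ =>
        ∀ z' : FinTrace, ProgTrace w z δ (.fin z') → SatT w z (.fin z') φ
  def SatT : World → FinTrace → TTrace → TraceForm → Prop
    | w, z, _, .base α => SatS w z α
    | w, z, τ, .and φ ψ => SatT w z τ φ ∧ SatT w z τ ψ
    | w, z, τ, .not φ => ¬ SatT w z τ φ
    | w, z, τ, .all s body => ∀ k : ℕ, SatT w z τ (body (Name.mk s k))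
    | w, z, τ, .untl I φ ψ =>
        ∃ k : ℕ, 1 ≤ k ∧ (k : ℕ∞) ≤ τ.len ∧
          SatT w (z ++ τ.takeFin k) (τ.drop k) ψ ∧
          I.memR (lastTime (z ++ τ.takeFin k) - lastTime z) ∧
          ∀ m : ℕ, 1 ≤ m → m < k → SatT w (z ++ τ.takeFin m) (τ.drop m) φ
end

/-- `w ⊨ α` -/
def Sat0 (w : World) (α : SitForm) : Prop := SatS w [] α

/-- Validity in t-ESG. -/
def TESGValid (α : SitForm) : Prop := ∀ w : World, Sat0 w α

def SatAll (w : World) (Γ : Set SitForm) : Prop := ∀ α ∈ Γ, Sat0 w α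

/-- Entailment in t-ESG. -/
def Entails (Γ : Set SitForm) (α : SitForm) : Prop :=
  ∀ w : World, SatAll w Γ → Sat0 w α
/-! ### Syntactic classes of terms and formulas -/

mutual
  /-- A term mentioning no clock terms (in particular it is of sort object or
  action, as are all of its subterms). -/
  def Term.noClk : Term → Prop
    | .name n => n.sort ≠ Sort3.clk
    | .app f args => f.sort ≠ Sort3.clk ∧ ArgList.noClk args
  def ArgList.noClk : ArgList → Prop
    | .nil => True
    | .cons t ts => Term.noClk t ∧ ArgList.noClk ts
end

/-- Static situation formulas: no `[·]`, `⟦·⟧` or `□` operators. -/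
def SitForm.IsStatic : SitForm → Prop
  | .pred _ _ => True
  | .eq _ _ => True
  | .clockCmp _ _ _ => True
  | .constCmp _ _ _ => True
  | .and α β => α.IsStatic ∧ β.IsStatic
  | .not α => α.IsStatic
  | .all _ body => ∀ n : Name, (body n).IsStatic
  | .box _ => False
  | .after _ _ => False
  | .during _ _ => False
  | .duringFin _ _ => False

/-- Fluent situation formulas: static, time-invariant (no clock terms, no
mention of the clock-constraint predicate `gc`) and no mention of `poss`. -/
def SitForm.IsFluentF : SitForm → Prop
  | .pred P args => P ≠ PredSym.poss ∧ P ≠ PredSym.gc ∧ ArgList.noClk args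
  | .eq t₁ t₂ => Term.noClk t₁ ∧ Term.noClk t₂
  | .clockCmp _ _ _ => False
  | .constCmp _ _ _ => True
  | .and α β => α.IsFluentF ∧ β.IsFluentF
  | .not α => α.IsFluentF
  | .all s body => s ≠ Sort3.clk ∧ ∀ n : Name, (body n).IsFluentF
  | .box _ => False
  | .after _ _ => False
  | .during _ _ => False
  | .duringFin _ _ => False

/-- Static situation formulas that do not mention `poss`. -/
def SitForm.IsStaticNoPoss : SitForm → Prop
  | .pred P _ => P ≠ PredSym.poss
  | .eq _ _ => True
  | .clockCmp _ _ _ => True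
  | .constCmp _ _ _ => True
  | .and α β => α.IsStaticNoPoss ∧ β.IsStaticNoPoss
  | .not α => α.IsStaticNoPoss
  | .all _ body => ∀ n : Name, (body n).IsStaticNoPoss
  | .box _ => False
  | .after _ _ => False
  | .during _ _ => False
  | .duringFin _ _ => False

/-- Time-invariant (static) situation formulas: no clock terms and no mention
of the clock-constraint predicate `gc`. -/
def SitForm.IsTimeInvS : SitForm → Prop
  | .pred P args => P ≠ PredSym.gc ∧ ArgList.noClk args
  | .eq t₁ t₂ => Term.noClk t₁ ∧ Term.noClk t₂
  | .clockCmp _ _ _ => False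
  | .constCmp _ _ _ => True
  | .and α β => α.IsTimeInvS ∧ β.IsTimeInvS
  | .not α => α.IsTimeInvS
  | .all s body => s ≠ Sort3.clk ∧ ∀ n : Name, (body n).IsTimeInvS
  | .box _ => False
  | .after _ _ => False
  | .during _ _ => False
  | .duringFin _ _ => False

/-! ### Formulas over a pair `(F, C)` of fluents and clocks -/

mutual
  def Term.Over (Fn : Set FuncSym) (C : Set ℕ) : Term → Prop
    | .name n => n.sort = Sort3.clk → n.id ∈ C
    | .app f args => (f.fluent = true → f ∈ Fn) ∧ ArgList.Over Fn C args
  def ArgList.Over (Fn : Set FuncSym) (C : Set ℕ) : ArgList → Prop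
    | .nil => True
    | .cons t ts => Term.Over Fn C t ∧ ArgList.Over Fn C ts
end

mutual
  /-- Situation formulas over `(F, C)`: mentioning only (relational) fluents
  from `R`, functional fluents from `Fn` and clocks from `C` (the distinguished
  predicates `poss`, `gc` are determined by a BAT and are allowed as well). -/
  def OverS (R : Set PredSym) (Fn : Set FuncSym) (C : Set ℕ) : SitForm → Prop
    | .pred P args =>
        (P.isFluent = true → P = PredSym.poss ∨ P = PredSym.gc ∨ P ∈ R) ∧
        ArgList.Over Fn C args
    | .eq t₁ t₂ => Term.Over Fn C t₁ ∧ Term.Over Fn C t₂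
    | .clockCmp c _ _ => Term.Over Fn C c
    | .constCmp _ _ _ => True
    | .and α β => OverS R Fn C α ∧ OverS R Fn C β
    | .not α => OverS R Fn C α
    | .all s body => ∀ k : ℕ,
        OverS R Fn (C ∪ (if s = Sort3.clk then {k} else ∅)) (body (Name.mk s k))
    | .box α => OverS R Fn C α
    | .after δ α => OverP R Fn C δ ∧ OverS R Fn C α
    | .during δ φ => OverP R Fn C δ ∧ OverT R Fn C φ
    | .duringFin δ φ => OverP R Fn C δ ∧ OverT R Fn C φ
  def OverT (R : Set PredSym) (Fn : Set FuncSym) (C : Set ℕ) : TraceForm → Prop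
    | .base α => OverS R Fn C α
    | .and φ ψ => OverT R Fn C φ ∧ OverT R Fn C ψ
    | .not φ => OverT R Fn C φ
    | .all s body => ∀ k : ℕ,
        OverT R Fn (C ∪ (if s = Sort3.clk then {k} else ∅)) (body (Name.mk s k))
    | .untl _ φ ψ => OverT R Fn C φ ∧ OverT R Fn C ψ
  def OverP (R : Set PredSym) (Fn : Set FuncSym) (C : Set ℕ) : Prog → Prop
    | .act t => Term.Over Fn C t
    | .test α => OverS R Fn C α
    | .seq δ₁ δ₂ => OverP R Fn C δ₁ ∧ OverP R Fn C δ₂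
    | .choice δ₁ δ₂ => OverP R Fn C δ₁ ∧ OverP R Fn C δ₂
    | .conc δ₁ δ₂ => OverP R Fn C δ₁ ∧ OverP R Fn C δ₂
    | .star δ => OverP R Fn C δ
end

/-! ### The ESG fragment: no clocks, no `reset`/`gc`, only unbounded until -/

mutual
  def IsESGS : SitForm → Prop
    | .pred P args => P ≠ PredSym.reset ∧ P ≠ PredSym.gc ∧ ArgList.noClk args
    | .eq t₁ t₂ => Term.noClk t₁ ∧ Term.noClk t₂
    | .clockCmp _ _ _ => False
    | .constCmp _ _ _ => False
    | .and α β => IsESGS α ∧ IsESGS β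
    | .not α => IsESGS α
    | .all s body => s ≠ Sort3.clk ∧ ∀ n : Name, IsESGS (body n)
    | .box α => IsESGS α
    | .after δ α => IsESGP δ ∧ IsESGS α
    | .during δ φ => IsESGP δ ∧ IsESGT φ
    | .duringFin δ φ => IsESGP δ ∧ IsESGT φ
  def IsESGT : TraceForm → Prop
    | .base α => IsESGS α
    | .and φ ψ => IsESGT φ ∧ IsESGT ψ
    | .not φ => IsESGT φ
    | .all s body => s ≠ Sort3.clk ∧ ∀ n : Name, IsESGT (body n)
    | .untl I φ ψ => I = Ival.unbounded ∧ IsESGT φ ∧ IsESGT ψ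
  def IsESGP : Prog → Prop
    | .act t => Term.noClk t
    | .test α => α.IsStatic ∧ IsESGS α
    | .seq δ₁ δ₂ => IsESGP δ₁ ∧ IsESGP δ₂
    | .choice δ₁ δ₂ => IsESGP δ₁ ∧ IsESGP δ₂
    | .conc δ₁ δ₂ => IsESGP δ₁ ∧ IsESGP δ₂
    | .star δ => IsESGP δ
end
/-! ### The logic ESG: untimed traces and worlds -/

abbrev ETrace := List ℕ

structure EWorld : Type where
  fval : FuncSym → List Name → ETrace → Name
  pval : PredSym → List Name → ETrace → Bool
  fval_sort : ∀ f args z, (fval f args z).sort = f.sort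
  rigid_fun : ∀ f : FuncSym, f.fluent = false → ∀ args z z', fval f args z = fval f args z'
  rigid_pred : ∀ P : PredSym, P.isFluent = false → ∀ args z z', pval P args z = pval P args z'
  unique_names : ∀ f f' args args' z z', f.sort = Sort3.act → f'.sort = Sort3.act →
      (f, args) ≠ (f', args') → fval f args z ≠ fval f' args' z'

mutual
  def edenot (e : EWorld) (z : ETrace) : Term → Name
    | .name n => n
    | .app f args => e.fval f (edenotArgs e z args) z
  def edenotArgs (e : EWorld) (z : ETrace) : ArgList → List Name
    | .nil => []
    | .cons t ts => edenot e z t :: edenotArgs e z ts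
end

def EStaticSat (e : EWorld) (z : ETrace) : SitForm → Prop
  | .pred P args => e.pval P (edenotArgs e z args) z = true
  | .eq t₁ t₂ => edenot e z t₁ = edenot e z t₂
  | .clockCmp _ _ _ => False
  | .constCmp _ _ _ => False
  | .and α β => EStaticSat e z α ∧ EStaticSat e z β
  | .not α => ¬ EStaticSat e z α
  | .all s body => ∀ k : ℕ, EStaticSat e z (body (Name.mk s k))
  | .box _ => False
  | .after _ _ => False
  | .during _ _ => False
  | .duringFin _ _ => False

inductive EFinal (e : EWorld) (z : ETrace) : Prog → Prop
  | test {α} : EStaticSat e z α → EFinal e z (.test α)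
  | seq {δ₁ δ₂} : EFinal e z δ₁ → EFinal e z δ₂ → EFinal e z (.seq δ₁ δ₂)
  | choiceL {δ₁ δ₂} : EFinal e z δ₁ → EFinal e z (.choice δ₁ δ₂)
  | choiceR {δ₁ δ₂} : EFinal e z δ₂ → EFinal e z (.choice δ₁ δ₂)
  | star {δ} : EFinal e z (.star δ)
  | conc {δ₁ δ₂} : EFinal e z δ₁ → EFinal e z δ₂ → EFinal e z (.conc δ₁ δ₂)

inductive ETransA (e : EWorld) (z : ETrace) : Prog → ETrace → Prog → Prop
  | act {a : Term} (h : (edenot e z a).sort = Sort3.act) :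
      ETransA e z (.act a) (z ++ [(edenot e z a).id]) nilProg
  | seqL {δ₁ δ₂ γ z'} : ETransA e z δ₁ z' γ → ETransA e z (.seq δ₁ δ₂) z' (.seq γ δ₂)
  | seqR {δ₁ δ₂ δ' z'} : EFinal e z δ₁ → ETransA e z δ₂ z' δ' → ETransA e z (.seq δ₁ δ₂) z' δ'
  | choiceL {δ₁ δ₂ δ' z'} : ETransA e z δ₁ z' δ' → ETransA e z (.choice δ₁ δ₂) z' δ'
  | choiceR {δ₁ δ₂ δ' z'} : ETransA e z δ₂ z' δ' → ETransA e z (.choice δ₁ δ₂) z' δ'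
  | star {δ γ z'} : ETransA e z δ z' γ → ETransA e z (.star δ) z' (.seq γ (.star δ))
  | concL {δ₁ δ₂ δ' z'} : ETransA e z δ₁ z' δ' → ETransA e z (.conc δ₁ δ₂) z' (.conc δ' δ₂)
  | concR {δ₁ δ₂ δ' z'} : ETransA e z δ₂ z' δ' → ETransA e z (.conc δ₁ δ₂) z' (.conc δ₁ δ')

abbrev EConfig := ETrace × Prog

def ETrans (e : EWorld) (c c' : EConfig) : Prop := ETransA e c.1 c.2 c'.1 c'.2

def EFinalC (e : EWorld) (c : EConfig) : Prop := EFinal e c.1 c.2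

def ETransStar (e : EWorld) : EConfig → EConfig → Prop :=
  Relation.ReflTransGen (ETrans e)

inductive ETTrace : Type
  | fin (z : ETrace)
  | inf (π : ℕ → ℕ)

def eprefixTr (π : ℕ → ℕ) (n : ℕ) : ETrace := (List.range n).map π

def ETTrace.len : ETTrace → ℕ∞
  | .fin z => (z.length : ℕ∞)
  | .inf _ => ⊤

def ETTrace.takeFin : ETTrace → ℕ → ETrace
  | .fin z, n => z.take n
  | .inf π, n => eprefixTr π n

def ETTrace.drop : ETTrace → ℕ → ETTrace
  | .fin z, n => .fin (z.drop n)
  | .inf π, n => .inf (fun i => π (i + n))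

def EProgTrace (e : EWorld) (z : ETrace) (δ : Prog) : ETTrace → Prop
  | .fin z' => ∃ δ', ETransStar e (z, δ) (z ++ z', δ') ∧ EFinalC e (z ++ z', δ')
  | .inf π => ∃ ρ : ℕ → Prog, ρ 0 = δ ∧
      (∀ i, ETrans e (z ++ eprefixTr π i, ρ i) (z ++ eprefixTr π (i + 1), ρ (i + 1))) ∧
      (∀ i, ¬ EFinalC e (z ++ eprefixTr π (i + 1), ρ (i + 1)))

mutual
  def ESatS : EWorld → ETrace → SitForm → Prop
    | e, z, .pred P args => e.pval P (edenotArgs e z args) z = true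
    | e, z, .eq t₁ t₂ => edenot e z t₁ = edenot e z t₂
    | _, _, .clockCmp _ _ _ => False
    | _, _, .constCmp _ _ _ => False
    | e, z, .and α β => ESatS e z α ∧ ESatS e z β
    | e, z, .not α => ¬ ESatS e z α
    | e, z, .all s body => ∀ k : ℕ, ESatS e z (body (Name.mk s k))
    | e, z, .box α => ∀ z' : ETrace, ESatS e (z ++ z') α
    | e, z, .after δ α => ∀ z' : ETrace, EProgTrace e z δ (.fin z') → ESatS e (z ++ z') α
    | e, z, .during δ φ => ∀ τ : ETTrace, EProgTrace e z δ τ → ESatT e z τ φ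
    | e, z, .duringFin δ φ =>
        ∀ z' : ETrace, EProgTrace e z δ (.fin z') → ESatT e z (.fin z') φ
  def ESatT : EWorld → ETrace → ETTrace → TraceForm → Prop
    | e, z, _, .base α => ESatS e z α
    | e, z, τ, .and φ ψ => ESatT e z τ φ ∧ ESatT e z τ ψ
    | e, z, τ, .not φ => ¬ ESatT e z τ φ
    | e, z, τ, .all s body => ∀ k : ℕ, ESatT e z τ (body (Name.mk s k))
    | e, z, τ, .untl _ φ ψ =>
        ∃ k : ℕ, 1 ≤ k ∧ (k : ℕ∞) ≤ τ.len ∧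
          ESatT e (z ++ τ.takeFin k) (τ.drop k) ψ ∧
          ∀ m : ℕ, 1 ≤ m → m < k → ESatT e (z ++ τ.takeFin m) (τ.drop m) φ
end

/-- `w ⊨_ESG α` -/
def ESat0 (e : EWorld) (α : SitForm) : Prop := ESatS e [] α

/-- Validity in ESG. -/
def ESGValid (α : SitForm) : Prop := ∀ e : EWorld, ESat0 e α

def ESatAll (e : EWorld) (Γ : Set SitForm) : Prop := ∀ α ∈ Γ, ESat0 e α

/-- Entailment in ESG. -/
def EEntails (Γ : Set SitForm) (α : SitForm) : Prop :=
  ∀ e : EWorld, ESatAll e Γ → ESat0 e α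

/-- The time-extended t-ESG world corresponding to an ESG world: it agrees
with the ESG world on every primitive term and primitive formula after every
timed trace, via the corresponding symbolic (untimed) trace. -/
def IsTimeExt (e : EWorld) (w : World) : Prop :=
  (∀ f args z, w.fval f args z = e.fval f args (untimed z)) ∧
  (∀ P args z, w.pval P args z = e.pval P args (untimed z))
/-! ### Basic action theories -/

/-- Universal quantification over a list of sorts (for the tuples `x⃗` in
successor state axioms). -/
def allNamesL : List Sort3 → (List Name → SitForm) → SitForm
  | [], body => body []
  | s :: ss, body => .all s fun x => allNamesL ss fun xs => body (x :: xs)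

def unaryArgs (t : Term) : ArgList := .cons t .nil

/-- A basic action theory over a finite set of fluents (`Frel` relational,
`Ffun` functional) and a finite set of clocks `C`:
* `init` is the set `Σ₀` of sentences about the initial situation,
* `pre a` is the right-hand side `π_a` of the precondition axiom
  `□ Poss(a) ≡ π_a`,
* `gcA a` is the right-hand side `g_a` of the clock-constraint axiom
  `□ g(a) ≡ g_a`,
* `ssaP P a x⃗` is the right-hand side `γ_F(x⃗)` of the successor state axiom
  `□ [a] F(x⃗) ≡ γ_F(x⃗)` of the relational fluent `P`,
* `ssaF f a x⃗ y` is the right-hand side `γ_f(x⃗, y)` of the successor state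
  axiom `□ [a] f(x⃗) = y ≡ γ_f(x⃗, y)` of the functional fluent `f`. -/
structure BAT : Type where
  Frel : Finset PredSym
  Ffun : Finset FuncSym
  C : Finset ℕ
  argSorts : PredSym → List Sort3
  argSortsF : FuncSym → List Sort3
  init : Set SitForm
  pre : Term → SitForm
  gcA : Term → SitForm
  ssaP : PredSym → Term → ArgList → SitForm
  ssaF : FuncSym → Term → ArgList → Term → SitForm

/-- The precondition axiom `□ ∀a. Poss(a) ≡ π_a`. -/
def BAT.preAx (B : BAT) : SitForm :=
  .box (.all .act fun a =>
    SitForm.iffS (.pred .poss (unaryArgs (.name a))) (B.pre (.name a)))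

/-- The clock-constraint axiom `□ ∀a. g(a) ≡ g_a`. -/
def BAT.gcAx (B : BAT) : SitForm :=
  .box (.all .act fun a =>
    SitForm.iffS (.pred .gc (unaryArgs (.name a))) (B.gcA (.name a)))

/-- The successor state axiom `□ ∀a ∀x⃗. [a] F(x⃗) ≡ γ_F(x⃗)`. -/
def BAT.ssaAxP (B : BAT) (P : PredSym) : SitForm :=
  .box (.all .act fun a => allNamesL (B.argSorts P) fun xs =>
    SitForm.iffS (.after (.act (.name a)) (.pred P (ArgList.ofNames xs)))
      (B.ssaP P (.name a) (ArgList.ofNames xs)))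

/-- The successor state axiom `□ ∀a ∀x⃗ ∀y. [a] (f(x⃗) = y) ≡ γ_f(x⃗, y)`. -/
def BAT.ssaAxF (B : BAT) (f : FuncSym) : SitForm :=
  .box (.all .act fun a => allNamesL (B.argSortsF f) fun xs =>
    .all f.sort fun y =>
      SitForm.iffS
        (.after (.act (.name a)) (.eq (.app f (ArgList.ofNames xs)) (.name y)))
        (B.ssaF f (.name a) (ArgList.ofNames xs) (.name y)))

/-- The sentences of the basic action theory:
`Σ = Σ₀ ∪ Σ_pre ∪ Σ_g ∪ Σ_post`. -/
def BAT.axioms (B : BAT) : Set SitForm :=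
  B.init ∪ {B.preAx, B.gcAx} ∪
    (B.ssaAxP '' (↑B.Frel : Set PredSym)) ∪ (B.ssaAxF '' (↑B.Ffun : Set FuncSym))

/-- Well-formedness of a basic action theory: the fluents are fluent symbols
(`Frel` contains the distinguished fluent `reset` but not `poss` or `gc`),
`Σ₀` consists of fluent sentences, `π_a` and all right-hand sides of successor
state axioms are fluent formulas, and `g_a` (as well as `γ_reset`, which
necessarily mentions clock terms) is a static formula not mentioning `poss`. -/
def BAT.WF (B : BAT) : Prop :=
  PredSym.reset ∈ B.Frel ∧ PredSym.poss ∉ B.Frel ∧ PredSym.gc ∉ B.Frel ∧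
  (∀ P ∈ B.Frel, P.isFluent = true) ∧ (∀ f ∈ B.Ffun, f.fluent = true) ∧
  (∀ α ∈ B.init, α.IsFluentF) ∧
  (∀ t, (B.pre t).IsFluentF) ∧
  (∀ t, (B.gcA t).IsStaticNoPoss) ∧
  (∀ P ∈ B.Frel, P ≠ PredSym.reset → ∀ a xs, (B.ssaP P a xs).IsFluentF) ∧
  (∀ a xs, (B.ssaP PredSym.reset a xs).IsStaticNoPoss) ∧
  (∀ f ∈ B.Ffun, ∀ a xs y, (B.ssaF f a xs y).IsFluentF)

/-- `w_Σ`: the world that is like `w` except that it satisfies the dynamics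
prescribed by the basic action theory `B`:
* it agrees with `w` on all symbols outside the fluents of `B` (after every
  trace), and on all fluents of `B` initially;
* after an action, the values of the fluents of `B` are determined by their
  successor state axioms;
* the truth of `Poss` and of the clock-constraint predicate `g` is determined
  by the precondition and clock-constraint axioms. -/
def IsWSigma (B : BAT) (w wS : World) : Prop :=
  (∀ f : FuncSym, f ∉ B.Ffun → ∀ args z, wS.fval f args z = w.fval f args z) ∧
  (∀ P : PredSym, P ∉ B.Frel → P ≠ PredSym.poss → P ≠ PredSym.gc →
      ∀ args z, wS.pval P args z = w.pval P args z) ∧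
  (∀ f ∈ B.Ffun, ∀ args : List Name, wS.fval f args [] = w.fval f args []) ∧
  (∀ f ∈ B.Ffun, ∀ (args : List Name) (z : FinTrace) (t : ℝ) (p : ℕ) (n : Name),
      (wS.fval f args (z ++ [(t, p)]) = n ↔
        SatS wS z (B.ssaF f (.name (Name.mk .act p)) (ArgList.ofNames args) (.name n)))) ∧
  (∀ P ∈ B.Frel, ∀ args : List Name, wS.pval P args [] = w.pval P args []) ∧
  (∀ P ∈ B.Frel, ∀ (args : List Name) (z : FinTrace) (t : ℝ) (p : ℕ),
      (wS.pval P args (z ++ [(t, p)]) = true ↔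
        SatS wS z (B.ssaP P (.name (Name.mk .act p)) (ArgList.ofNames args)))) ∧
  (∀ (n : Name) (z : FinTrace),
      (wS.pval .poss [n] z = true ↔ SatS wS z (B.pre (.name n)))) ∧
  (∀ (args : List Name) (z : FinTrace), args.length ≠ 1 →
      wS.pval .poss args z = w.pval .poss args z) ∧
  (∀ (n : Name) (z : FinTrace),
      (wS.pval .gc [n] z = true ↔ SatS wS z (B.gcA (.name n)))) ∧
  (∀ (args : List Name) (z : FinTrace), args.length ≠ 1 →
      wS.pval .gc args z = w.pval .gc args z)

/-! ### Complete information -/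

/-- A basic action theory with complete information: the initial theory
decides every primitive formula over `(F, C)` and determines the value of
every functional fluent of `F`. -/
def CompleteInfo (B : BAT) : Prop :=
  (∀ (P : PredSym) (args : List Name),
      (P.isFluent = true → P ∈ B.Frel) →
      (∀ n ∈ args, n.sort = Sort3.clk → n.id ∈ B.C) →
      Entails B.init (.pred P (ArgList.ofNames args)) ∨
        Entails B.init (.not (.pred P (ArgList.ofNames args)))) ∧
  (∀ f ∈ B.Ffun, ∀ args : List Name, ∃ n : Name,
      Entails B.init (.eq (.app f (ArgList.ofNames args)) (.name n)))
/-! ### Regression -/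

/-- Rational timed traces (all time points rational). -/
abbrev RatTrace := List (ℚ × ℕ)

def ratToFin (z : RatTrace) : FinTrace := z.map fun q => ((q.1 : ℝ), q.2)

def lastTimeQ (z : RatTrace) : ℚ := ((z.getLast?).map Prod.fst).getD 0

/-- Unfold the distinguished predicates `Poss` and `g` once, replacing them by
the right-hand sides of the precondition and clock-constraint axioms. -/
def unfoldPG (B : BAT) : SitForm → SitForm
  | .pred .poss (.cons t .nil) => B.pre t
  | .pred .gc (.cons t .nil) => B.gcA t
  | .pred P args => .pred P args
  | .eq t₁ t₂ => .eq t₁ t₂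
  | .clockCmp c op r => .clockCmp c op r
  | .constCmp r op r' => .constCmp r op r'
  | .and α β => .and (unfoldPG B α) (unfoldPG B β)
  | .not α => .not (unfoldPG B α)
  | .all s body => .all s fun n => unfoldPG B (body n)
  | α => α

/-- One regression step through a time increment `d`: clock comparisons
`c ⋈ r` become `c ⋈ (r - d)`. -/
def RstepT (d : ℚ) : SitForm → SitForm
  | .clockCmp c op r => .clockCmp c op (r - d)
  | .and α β => .and (RstepT d α) (RstepT d β)
  | .not α => .not (RstepT d α)
  | .all s body => .all s fun n => RstepT d (body n)
  | α => α

/-- One regression step through an action `p`: a fluent atom is replaced by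
the (instantiated) right-hand side of its successor state axiom, and a clock
comparison `c ⋈ r` becomes
`(R[Reset(c)] ∧ 0 ⋈ r) ∨ (¬ R[Reset(c)] ∧ c ⋈ r)`. -/
def RstepA (B : BAT) (p : ℕ) : SitForm → SitForm
  | .pred (.fl i) args => B.ssaP (.fl i) (.name (Name.mk .act p)) args
  | .pred .reset args => B.ssaP .reset (.name (Name.mk .act p)) args
  | .pred P args => .pred P args
  | .eq t₁ t₂ => .eq t₁ t₂
  | .clockCmp c op r =>
      SitForm.orS
        (.and (B.ssaP .reset (.name (Name.mk .act p)) (.cons c .nil)) (.constCmp 0 op r))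
        (.and (.not (B.ssaP .reset (.name (Name.mk .act p)) (.cons c .nil)))
          (.clockCmp c op r))
  | .constCmp r op r' => .constCmp r op r'
  | .and α β => .and (RstepA B p α) (RstepA B p β)
  | .not α => .not (RstepA B p α)
  | .all s body => .all s fun n => RstepA B p (body n)
  | α => α

/-- Regression over the empty trace: clock comparisons `c ⋈ r` become
`0 ⋈ r` (all clocks are initialized to `0`); everything else is unchanged. -/
def Rinit : SitForm → SitForm
  | .clockCmp _ op r => .constCmp 0 op r
  | .and α β => .and (Rinit α) (Rinit β)
  | .not α => .not (Rinit α)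
  | .all s body => .all s fun n => Rinit (body n)
  | α => α

/-- Regression through a (reversed) rational trace: each pair `(t, p)` is
regressed by first regressing through the action `p` and then through the
time increment `t - time(z)`. -/
def RcoreRev (B : BAT) : RatTrace → SitForm → SitForm
  | [], α => Rinit α
  | (t, p) :: zr, α =>
      RcoreRev B zr (RstepT (t - ((zr.head?.map Prod.fst).getD 0)) (RstepA B p α))

/-- The regression operator `R[z, α]` for a static formula `α` and a rational
trace `z`. -/
def Regress (B : BAT) (z : RatTrace) (α : SitForm) : SitForm :=
  RcoreRev B z.reverse (unfoldPG B α)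
/-! ### Finite-domain basic action theories -/

def bigOr : List SitForm → SitForm := fun l => l.foldr SitForm.orS falseSit

/-- A finite-domain BAT: a BAT together with finite domains of object, action
and clock standard names, and rigid type predicates `τ_o`, `τ_a`, `τ_c`. -/
structure FDBAT extends BAT where
  Dobj : Finset ℕ
  Dact : Finset ℕ
  Dclk : Finset ℕ
  tauO : ℕ
  tauA : ℕ
  tauC : ℕ

def FDBAT.dom (B : FDBAT) : Sort3 → Finset ℕ
  | .obj => B.Dobj
  | .act => B.Dact
  | .clk => B.Dclk

def FDBAT.tau (B : FDBAT) : Sort3 → ℕ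
  | .obj => B.tauO
  | .act => B.tauA
  | .clk => B.tauC

def tauAtom (tau : Sort3 → ℕ) (s : Sort3) (n : Name) : SitForm :=
  .pred (.rg (tau s)) (.cons (.name n) .nil)

/-- The domain closure axiom `∀x. τ(x) ≡ (x = n₁ ∨ … ∨ x = n_k)`. -/
noncomputable def FDBAT.closureAx (B : FDBAT) (s : Sort3) : SitForm :=
  .all s fun x =>
    SitForm.iffS (tauAtom B.tau s x)
      (bigOr ((B.dom s).toList.map fun k => .eq (.name x) (.name (Name.mk s k))))

/-! Relativized formulas: every universal quantifier occurs in the form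
`∀x. τ(x) ⊃ φ(x)`. -/

mutual
  inductive RelS (tau : Sort3 → ℕ) : SitForm → Prop
    | pred {P args} : RelS tau (.pred P args)
    | eq {t₁ t₂} : RelS tau (.eq t₁ t₂)
    | clockCmp {c op r} : RelS tau (.clockCmp c op r)
    | constCmp {r op r'} : RelS tau (.constCmp r op r')
    | and {α β} : RelS tau α → RelS tau β → RelS tau (.and α β)
    | not {α} : RelS tau α → RelS tau (.not α)
    | all {s body} (ψ : Name → SitForm) :
        (∀ n, body n = SitForm.impS (tauAtom tau s n) (ψ n)) →
        (∀ n, RelS tau (ψ n)) → RelS tau (.all s body)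
    | box {α} : RelS tau α → RelS tau (.box α)
    | after {δ α} : RelP tau δ → RelS tau α → RelS tau (.after δ α)
    | during {δ φ} : RelP tau δ → RelT tau φ → RelS tau (.during δ φ)
    | duringFin {δ φ} : RelP tau δ → RelT tau φ → RelS tau (.duringFin δ φ)
  inductive RelT (tau : Sort3 → ℕ) : TraceForm → Prop
    | base {α} : RelS tau α → RelT tau (.base α)
    | and {φ ψ} : RelT tau φ → RelT tau ψ → RelT tau (.and φ ψ)
    | not {φ} : RelT tau φ → RelT tau (.not φ)
    | all {s body} (ψ : Name → TraceForm) :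
        (∀ n, body n = TraceForm.not (.and (.base (tauAtom tau s n)) (.not (ψ n)))) →
        (∀ n, RelT tau (ψ n)) → RelT tau (.all s body)
    | untl {I φ ψ} : RelT tau φ → RelT tau ψ → RelT tau (.untl I φ ψ)
  inductive RelP (tau : Sort3 → ℕ) : Prog → Prop
    | act {t} : RelP tau (.act t)
    | test {α} : RelS tau α → RelP tau (.test α)
    | seq {δ₁ δ₂} : RelP tau δ₁ → RelP tau δ₂ → RelP tau (.seq δ₁ δ₂)
    | choice {δ₁ δ₂} : RelP tau δ₁ → RelP tau δ₂ → RelP tau (.choice δ₁ δ₂)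
    | conc {δ₁ δ₂} : RelP tau δ₁ → RelP tau δ₂ → RelP tau (.conc δ₁ δ₂)
    | star {δ} : RelP tau δ → RelP tau (.star δ)
end

/-- Well-formedness of a finite-domain BAT: `Σ₀` contains the three domain
closure axioms and, apart from these, every universal quantifier in `Σ` is
relativized to one of the type predicates. -/
def FDBAT.FDWF (B : FDBAT) : Prop :=
  (∀ s : Sort3, B.closureAx s ∈ B.init) ∧
  (∀ α ∈ B.init, (∀ s : Sort3, α ≠ B.closureAx s) → RelS B.tau α) ∧
  (∀ t, RelS B.tau (B.pre t)) ∧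
  (∀ t, RelS B.tau (B.gcA t)) ∧
  (∀ P a xs, RelS B.tau (B.ssaP P a xs)) ∧
  (∀ f a xs y, RelS B.tau (B.ssaF f a xs y))

/-- `w ≡_F w'`: the two worlds agree on the initial values of all fluents of
the finite-domain BAT on all arguments from the domain. -/
def EquivF (B : FDBAT) (w w' : World) : Prop :=
  (∀ P ∈ B.Frel, ∀ args : List Name,
      (∀ n ∈ args, n.id ∈ B.dom n.sort) → w.pval P args [] = w'.pval P args []) ∧
  (∀ f ∈ B.Ffun, ∀ args : List Name,
      (∀ n ∈ args, n.id ∈ B.dom n.sort) → w.fval f args [] = w'.fval f args [])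

/-! ### Metric temporal logic (MTL), pointwise semantics over timed words -/

/-- MTL formulas; atomic propositions are identified with nullary fluents. -/
inductive MTL : Type
  | atom (p : ℕ)
  | mnot (φ : MTL)
  | mand (φ ψ : MTL)
  | muntil (I : Ival) (φ ψ : MTL)

/-- The t-ESG trace formula corresponding to an MTL formula. -/
def MTL.toTrace : MTL → TraceForm
  | .atom p => .base (.pred (.fl p) .nil)
  | .mnot φ => .not φ.toTrace
  | .mand φ ψ => .and φ.toTrace ψ.toTrace
  | .muntil I φ ψ => .untl I φ.toTrace ψ.toTrace

/-- A (finite or infinite) timed word: position `i` carries a set of atomic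
propositions and a time point (`none` marks positions past the end of a
finite word). -/
abbrev TWord := ℕ → Option (Set ℕ × ℝ)

structure TWordWF (ρ : TWord) : Prop where
  init : ∃ s, ρ 0 = some (s, 0)
  closed : ∀ i, ρ (i + 1) ≠ none → ρ i ≠ none
  mono : ∀ i s t s' t', ρ i = some (s, t) → ρ (i + 1) = some (s', t') → t ≤ t'

/-- Pointwise MTL semantics: `ρ, i ⊨ φ`. -/
def MTLSat (ρ : TWord) : ℕ → MTL → Prop
  | i, .atom p => ∃ s t, ρ i = some (s, t) ∧ p ∈ s
  | i, .mnot φ => ¬ MTLSat ρ i φ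
  | i, .mand φ ψ => MTLSat ρ i φ ∧ MTLSat ρ i ψ
  | i, .muntil I φ ψ =>
      ∃ (j : ℕ) (si : Set ℕ) (ti : ℝ) (sj : Set ℕ) (tj : ℝ),
        i < j ∧ ρ i = some (si, ti) ∧ ρ j = some (sj, tj) ∧
        MTLSat ρ j ψ ∧ I.memR (tj - ti) ∧
        ∀ m, i < m → m < j → MTLSat ρ m φ

/-- Validity in MTL (pointwise semantics over timed words). -/
def MTLValid (φ : MTL) : Prop := ∀ ρ : TWord, TWordWF ρ → MTLSat ρ 0 φ

/-- The timed word corresponding to a pair `(w, τ)` of a t-ESG world and a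
timed trace: position `i` carries the set of (nullary) primitive formulas true
in `w` after the prefix of `τ` of length `i`, together with its time point. -/
def wordOf (w : World) (τ : TTrace) : TWord := fun i =>
  match τ with
  | .fin z =>
      if i ≤ z.length then
        some ({p : ℕ | w.pval (.fl p) [] (z.take i) = true}, lastTime (z.take i))
      else none
  | .inf π =>
      some ({p : ℕ | w.pval (.fl p) [] (prefixTr π i) = true}, lastTime (prefixTr π i))
/-- The sentence `α = [p]F ∨ [p]¬F` for the action standard name `p` and the
nullary fluent predicate `F`. -/
def stmt10Form (p fid : ℕ) : SitForm :=
  SitForm.orS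
    (.after (.act (.name (Name.mk .act p))) (.pred (.fl fid) .nil))
    (.after (.act (.name (Name.mk .act p))) (.not (.pred (.fl fid) .nil)))

/-! Both logics make `[δ]α ∨ [δ]¬α` true exactly when `α` has the same truth value after all finite
program traces of `δ`. An ESG action has at most one program trace; in t-ESG it can be executed at
every time point, and a world is free to let a fluent depend on the time of the action. -/

/-- The sentence `[δ]α ∨ [δ]¬α`, expressing that the outcome of `δ` with respect to `α` is
determined. `stmt10Form` is by definition the instance for a single action and a nullary fluent. -/
def determinedAfter (δ : Prog) (α : SitForm) : SitForm :=
  .orS (.after δ α) (.after δ (.not α))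

theorem isESGS_determinedAfter {δ : Prog} {α : SitForm} (hδ : IsESGP δ) (hα : IsESGS α) :
    IsESGS (determinedAfter δ α) :=
  ⟨⟨hδ, hα⟩, ⟨hδ, hα⟩⟩

theorem forall_or_forall_not_iff {ι : Type*} {p q : ι → Prop} :
    ((∀ i, p i → q i) ∨ ∀ i, p i → ¬ q i) ↔ ∀ i j, p i → p j → (q i ↔ q j) := by
  refine ⟨?_, fun h => or_iff_not_imp_left.2 fun hq => ?_⟩
  · rintro (h | h) i j hi hj
    · exact iff_of_true (h i hi) (h j hj)
    · exact iff_of_false (h i hi) (h j hj)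
  · obtain ⟨i, hi, hqi⟩ := by simpa only [not_forall, exists_prop] using hq
    exact fun j hj hqj => hqi ((h i j hi hj).2 hqj)

section ESG

variable {e : EWorld} {z z' : ETrace}

theorem eSatS_orS {α β : SitForm} : ESatS e z (α.orS β) ↔ ESatS e z α ∨ ESatS e z β := by
  simp only [SitForm.orS, ESatS, or_iff_not_and_not]

theorem eSatS_determinedAfter_iff {δ : Prog} {α : SitForm} :
    ESatS e z (determinedAfter δ α) ↔
      ∀ z₁ z₂, EProgTrace e z δ (.fin z₁) → EProgTrace e z δ (.fin z₂) →
        (ESatS e (z ++ z₁) α ↔ ESatS e (z ++ z₂) α) := by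
  simp only [determinedAfter, eSatS_orS, ESatS, forall_or_forall_not_iff]

theorem not_eTrans_nilProg {c : EConfig} : ¬ ETrans e (z, nilProg) c :=
  nofun

theorem EProgTrace.eq_singleton_of_act {a : Term} (h : EProgTrace e z (.act a) (.fin z')) :
    z' = [(edenot e z a).id] := by
  obtain ⟨δ', hsteps, hfinal⟩ := h
  rcases hsteps.cases_head with hstart | ⟨⟨z₁, δ₁⟩, hact, hrest⟩
  · obtain ⟨-, rfl⟩ := Prod.mk.inj hstart
    cases hfinal
  · obtain ⟨⟩ : ETransA e z (.act a) z₁ δ₁ := hact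
    rcases hrest.cases_head with hend | ⟨_, hnil, -⟩
    · exact (List.append_cancel_left (congrArg Prod.fst hend)).symm
    · exact (not_eTrans_nilProg hnil).elim

theorem esgValid_determinedAfter_act (a : Term) (α : SitForm) :
    ESGValid (determinedAfter (.act a) α) := by
  intro e
  refine eSatS_determinedAfter_iff.2 fun z₁ z₂ h₁ h₂ => ?_
  rw [h₁.eq_singleton_of_act, h₂.eq_singleton_of_act]

end ESG

section TimedESG

variable {w : World} {z : FinTrace}

theorem satS_orS {α β : SitForm} : SatS w z (α.orS β) ↔ SatS w z α ∨ SatS w z β := by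
  simp only [SitForm.orS, SatS, or_iff_not_and_not]

theorem satS_determinedAfter_iff {δ : Prog} {α : SitForm} :
    SatS w z (determinedAfter δ α) ↔
      ∀ z₁ z₂, ProgTrace w z δ (.fin z₁) → ProgTrace w z δ (.fin z₂) →
        (SatS w (z ++ z₁) α ↔ SatS w (z ++ z₂) α) := by
  simp only [determinedAfter, satS_orS, SatS, forall_or_forall_not_iff]

theorem final_nilProg {t : ℝ} : Final w z t nilProg :=
  .test fun _ => rfl

theorem progTrace_act {a : Term} {t : ℝ} (ha : (denot w z a).sort = .act) (ht : lastTime z ≤ t) :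
    ProgTrace w z (.act a) (.fin [(t, (denot w z a).id)]) :=
  ⟨nilProg, .single ⟨t, ht, .act ha⟩, final_nilProg⟩

end TimedESG

section Realization

instance : Finite Sort3 :=
  .of_surjective ![Sort3.obj, .act, .clk] fun
    | .obj => ⟨0, rfl⟩
    | .act => ⟨1, rfl⟩
    | .clk => ⟨2, rfl⟩

instance : Countable Name :=
  Function.Injective.countable (f := fun n : Name => (n.sort, n.id)) fun
    | ⟨_, _⟩, ⟨_, _⟩, rfl => rfl

instance : Countable FuncSym :=
  Function.Injective.countable (f := fun f : FuncSym => (f.id, f.sort, f.fluent)) fun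
    | ⟨_, _, _⟩, ⟨_, _, _⟩, rfl => rfl

/-- The value after a timed trace of a clock that starts at `0`, runs at unit rate, and is reset by
the last action of every trace satisfying `reset`. -/
noncomputable def clockValue (reset : FinTrace → Bool) (z : FinTrace) : ℝ :=
  z.reverseRecOn 0 fun z (t, p) x => if reset (z ++ [(t, p)]) then 0 else x + (t - lastTime z)

theorem clockValue_nil (reset : FinTrace → Bool) : clockValue reset [] = 0 := by
  rw [clockValue, List.reverseRecOn_nil]

theorem clockValue_concat (reset : FinTrace → Bool) (z : FinTrace) (t : ℝ) (p : ℕ) :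
    clockValue reset (z ++ [(t, p)]) =
      if reset (z ++ [(t, p)]) then 0 else clockValue reset z + (t - lastTime z) := by
  rw [clockValue, List.reverseRecOn_concat, ← clockValue]

theorem exists_world_pval_eq (v : PredSym → List Name → FinTrace → Bool)
    (hv : ∀ P : PredSym, P.isFluent = false → ∀ args z z', v P args z = v P args z') :
    ∃ w : World, w.pval = v := by
  obtain ⟨code, hcode⟩ := exists_injective_nat (FuncSym × List Name)
  exact ⟨{ fval f args _ := ⟨f.sort, code (f, args)⟩
           pval := v
           cval c := clockValue (v .reset [⟨.clk, c⟩])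
           fval_sort _ _ _ := rfl
           rigid_fun _ _ _ _ _ := rfl
           rigid_pred := hv
           unique_names _ _ _ _ _ _ _ _ hne heq := hne (hcode (congrArg Name.id heq))
           clock_init _ := clockValue_nil _
           clock_prog _ z t p _ := clockValue_concat _ z t p }, rfl⟩

theorem exists_world_pval_false_true {P : PredSym} (hP : P.isFluent = true) (args : List Name)
    {z₀ z₁ : FinTrace} (hz : z₀ ≠ z₁) :
    ∃ w : World, w.pval P args z₀ = false ∧ w.pval P args z₁ = true := by
  classical
  obtain ⟨w, hw⟩ := exists_world_pval_eq (fun Q _ z => decide (Q = P ∧ z = z₁)) <| by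
    rintro Q hQ - z z'
    have hQP : Q ≠ P := by
      rintro rfl
      exact Bool.false_ne_true (hQ.symm.trans hP)
    simp only [hQP, false_and]
  exact ⟨w, by simp [hw, hz]⟩

end Realization

theorem not_sat0_stmt10Form {w : World} {p fid : ℕ} {t₀ t₁ : ℝ} (ht₀ : 0 ≤ t₀) (ht₁ : 0 ≤ t₁)
    (h₀ : w.pval (.fl fid) [] [(t₀, p)] = false) (h₁ : w.pval (.fl fid) [] [(t₁, p)] = true) :
    ¬ Sat0 w (stmt10Form p fid) := by
  intro h
  have hiff := satS_determinedAfter_iff.1 h _ _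
    (progTrace_act rfl ht₀) (progTrace_act rfl ht₁)
  have hF : w.pval (.fl fid) [] [(t₀, p)] = true := hiff.2 h₁
  exact Bool.false_ne_true (h₀.symm.trans hF)

/-- There exists a sentence `α` of ESG that is valid in ESG
but not valid in t-ESG.  In particular, for an action standard name `p` and a
nullary fluent predicate `F`, the sentence `α = [p]F ∨ [p]¬F` is valid in ESG,
but there is a t-ESG world `w` with `w[F, ⟨0, p⟩] = 0` and `w[F, ⟨1, p⟩] = 1`,
so that `w ⊭ α` and hence `α` is not t-ESG-valid. -/
theorem esg_valid_but_not_tesg_valid (p fid : ℕ) :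
    (∃ α : SitForm, IsESGS α ∧ ESGValid α ∧ ¬ TESGValid α) ∧
    IsESGS (stmt10Form p fid) ∧
    ESGValid (stmt10Form p fid) ∧
    (∃ w : World,
        w.pval (.fl fid) [] [((0 : ℝ), p)] = false ∧
        w.pval (.fl fid) [] [((1 : ℝ), p)] = true ∧
        ¬ Sat0 w (stmt10Form p fid)) ∧
    ¬ TESGValid (stmt10Form p fid) := by
  have hESG : IsESGS (stmt10Form p fid) :=
    isESGS_determinedAfter nofun ⟨nofun, nofun, trivial⟩
  have hvalid : ESGValid (stmt10Form p fid) := esgValid_determinedAfter_act _ _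
  obtain ⟨w, h₀, h₁⟩ : ∃ w : World,
      w.pval (.fl fid) [] [((0 : ℝ), p)] = false ∧ w.pval (.fl fid) [] [((1 : ℝ), p)] = true :=
    exists_world_pval_false_true rfl [] (by simp)
  have hw : ¬ Sat0 w (stmt10Form p fid) := not_sat0_stmt10Form le_rfl zero_le_one h₀ h₁
  have hnot : ¬ TESGValid (stmt10Form p fid) := fun h => hw (h w)
  exact ⟨⟨_, hESG, hvalid, hnot⟩, hESG, hvalid, ⟨w, h₀, h₁, hw⟩, hnot⟩

end TESG
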